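/- Corollary (alignment on a subset): Suppose ⪰ is a binary relation on ℒ∞ and ⪰∂ is a binary relation on partial trajectories satisfying Axiom 1 (some reward function r* : S × A → ℝ expresses ⪰) and Axiom 2 (there exist a policy π and a transition matrix P with (π,P) unichain, together with a Markov prefix family (ℓ_h) for (π,P) with ℓ_h ∈ ℒ∞ for every h, such that for all partial trajectories h, h': h ⪰∂ h' iff ℓ_h ⪰ ℓ_{h'}). Then for any nonempty subsets S' ⊆ S and A' ⊆ A: (1) there exists a pair (r,V) that expresses ⪰∂ on (S',A'); and (2) if a pair (r,V) expresses ⪰∂ on (S',A'), then r expresses ⪰ on (S',A'). -/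

import Mathlib

open MeasureTheory Filter Finset Topology

noncomputable section

/-- The trajectory space uses the discrete (⊤) σ-algebra on `S × A`. -/
instance discreteMS (S A : Type) : MeasurableSpace (S × A) := ⊤

variable {S A : Type} [Fintype S] [DecidableEq S] [Fintype A] [DecidableEq A]
  [Nonempty S] [Nonempty A]

/-- A policy assigns to each state a probability distribution over actions. -/
def IsPolicy (π : S → A → ℝ) : Prop :=
  (∀ s a, 0 ≤ π s a) ∧ ∀ s, ∑ a, π s a = 1

/-- A transition matrix assigns to each action and state a probability distribution
over next states. -/
def IsTransition (P : A → S → S → ℝ) : Prop :=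
  (∀ a s s', 0 ≤ P a s s') ∧ ∀ a s, ∑ s', P a s s' = 1

/-- The state-transition matrix induced by a policy and a transition matrix. -/
def Mmat (π : S → A → ℝ) (P : A → S → S → ℝ) : Matrix S S ℝ :=
  Matrix.of fun s s' => ∑ a, π s a * P a s s'

/-- `(π, P)` is unichain: for every `s'`, the Cesàro averages of `(M(π,P)^t)(s,s')`
converge to a limit `μ s'` that does not depend on `s`. -/
def Unichain (π : S → A → ℝ) (P : A → S → S → ℝ) : Prop :=
  ∃ μ : S → ℝ, ∀ s s',
    Tendsto (fun T : ℕ => (∑ t ∈ range T, (Mmat π P ^ t) s s') / (T : ℝ))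
      atTop (𝓝 (μ s'))

/-- The bootstrapped return of a partial trajectory `h = (pairs, z)`. -/
def Breturn (r : S × A → ℝ) (V : S → ℝ) (h : List (S × A) × S) : ℝ :=
  (h.1.map r).sum + V h.2

/-- Membership in `ℒ∞`: a probability measure on the trajectory space `ℕ → S × A`
such that for every state `s` the relative state frequencies converge. -/
def MemLinf (ℓ : Measure (ℕ → S × A)) : Prop :=
  IsProbabilityMeasure ℓ ∧
    ∀ s : S, ∃ c : ℝ,
      Tendsto (fun T : ℕ => (∑ t ∈ range T, (ℓ {ω | (ω t).1 = s}).toReal) / (T : ℝ))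
        atTop (𝓝 c)

/-- The expected discounted return `v(ℓ,r,γ)` of a lottery `ℓ`. -/
def vdisc (ℓ : Measure (ℕ → S × A)) (r : S × A → ℝ) (γ : ℝ) : ℝ :=
  ∑' t : ℕ, γ ^ t * ∫ ω, r (ω t) ∂ℓ

/-- A reward function `r` expresses the preference relation `pref` on `ℒ∞`:
`ℓ ⪰ ℓ'` iff `γ ↦ v(ℓ,r,γ) − v(ℓ',r,γ)` converges, as `γ → 1⁻`, to a limit `≥ 0`. -/
def Expresses (r : S × A → ℝ)
    (pref : Measure (ℕ → S × A) → Measure (ℕ → S × A) → Prop) : Prop :=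
  ∀ ℓ ℓ', MemLinf ℓ → MemLinf ℓ' →
    (pref ℓ ℓ' ↔ ∃ c : ℝ, 0 ≤ c ∧
      Tendsto (fun γ : ℝ => vdisc ℓ r γ - vdisc ℓ' r γ) (𝓝[<] (1 : ℝ)) (𝓝 c))

/-- A family `(ℓ_h)` of probability measures on the trajectory space, indexed by partial
trajectories, is a Markov prefix family for `(π,P)`: the measure of any cylinder set of
length `n ≥ T` is the indicator that the cylinder agrees with `h`, times
`π(x_T)(b_T) · ∏_{k=T}^{n−1} P(b_k)(x_k)(x_{k+1}) · π(x_{k+1})(b_{k+1})`. -/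
def IsMarkovPrefixFamily (π : S → A → ℝ) (P : A → S → S → ℝ)
    (L : List (S × A) × S → Measure (ℕ → S × A)) : Prop :=
  ∀ (l : List (S × A)) (z : S) (n : ℕ), l.length ≤ n → ∀ x : ℕ → S × A,
    (L (l, z) {ω | ∀ k ≤ n, ω k = x k}).toReal =
      (if (∀ t : Fin l.length, x t = l.get t) ∧ (x l.length).1 = z then (1 : ℝ) else 0) *
        (π (x l.length).1 (x l.length).2 *
          ∏ k ∈ Finset.Ico l.length n,
            (P (x k).2 (x k).1 (x (k + 1)).1 * π (x (k + 1)).1 (x (k + 1)).2))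

/-- A partial trajectory is on `(S',A')` if its terminal state and all its states lie in
`S'` and all its actions lie in `A'`. -/
def PTrajOn (S' : Set S) (A' : Set A) (h : List (S × A) × S) : Prop :=
  h.2 ∈ S' ∧ ∀ p ∈ h.1, p.1 ∈ S' ∧ p.2 ∈ A'

/-- A measure `ℓ` is on `(S',A')` if almost every trajectory stays in `S' × A'`. -/
def MeasureOn (S' : Set S) (A' : Set A) (ℓ : Measure (ℕ → S × A)) : Prop :=
  ℓ {ω | ∀ t : ℕ, (ω t).1 ∈ S' ∧ (ω t).2 ∈ A'} = 1

/-- `(r,V)` expresses `⪰∂` on `(S',A')`: for all partial trajectories `h, h'` on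
`(S',A')`, `h ⪰∂ h'` iff `B(r,V)(h) ≥ B(r,V)(h')`. -/
def ExpressesPartialOn (S' : Set S) (A' : Set A)
    (r : S × A → ℝ) (V : S → ℝ)
    (prefP : List (S × A) × S → List (S × A) × S → Prop) : Prop :=
  ∀ h h', PTrajOn S' A' h → PTrajOn S' A' h' →
    (prefP h h' ↔ Breturn r V h' ≤ Breturn r V h)

/-- `r` expresses `⪰` on `(S',A')`: for all `ℓ, ℓ' ∈ ℒ∞` on `(S',A')`, `ℓ ⪰ ℓ'` iff
`γ ↦ v(ℓ,r,γ) − v(ℓ',r,γ)` converges, as `γ → 1⁻`, to a limit `≥ 0`. -/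
def ExpressesOn (S' : Set S) (A' : Set A) (r : S × A → ℝ)
    (pref : Measure (ℕ → S × A) → Measure (ℕ → S × A) → Prop) : Prop :=
  ∀ ℓ ℓ', MemLinf ℓ → MemLinf ℓ' → MeasureOn S' A' ℓ → MeasureOn S' A' ℓ' →
    (pref ℓ ℓ' ↔ ∃ c : ℝ, 0 ≤ c ∧
      Tendsto (fun γ : ℝ => vdisc ℓ r γ - vdisc ℓ' r γ) (𝓝[<] (1 : ℝ)) (𝓝 c))


/-! ### Discounted sums of bounded sequences -/

/-- The discounted sum `∑ γ^t u_t` of a real sequence. -/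
def discountedSum (u : ℕ → ℝ) (γ : ℝ) : ℝ := ∑' t : ℕ, γ ^ t * u t

theorem summable_discounted {u : ℕ → ℝ} {C : ℝ} (hu : ∀ t, |u t| ≤ C) {γ : ℝ}
    (h0 : 0 ≤ γ) (h1 : γ < 1) : Summable fun t : ℕ => γ ^ t * u t := by
  refine Summable.of_norm_bounded ((summable_geometric_of_lt_one h0 h1).mul_right C) fun t => ?_
  rw [Real.norm_eq_abs, abs_mul, abs_of_nonneg (pow_nonneg h0 t)]
  exact mul_le_mul_of_nonneg_left (hu t) (pow_nonneg h0 t)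

theorem discountedSum_eq_zero_add {u : ℕ → ℝ} {C : ℝ} (hu : ∀ t, |u t| ≤ C) {γ : ℝ}
    (h0 : 0 ≤ γ) (h1 : γ < 1) :
    discountedSum u γ = u 0 + γ * discountedSum (fun t => u (t + 1)) γ := by
  unfold discountedSum
  rw [(summable_discounted hu h0 h1).tsum_eq_zero_add, ← tsum_mul_left]
  simp [pow_succ', mul_assoc]

theorem one_sub_mul_abs_discountedSum_le {u : ℕ → ℝ} {C : ℝ} (hu : ∀ t, |u t| ≤ C) {γ : ℝ}
    (h0 : 0 ≤ γ) (h1 : γ < 1) : (1 - γ) * |discountedSum u γ| ≤ C := by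
  have hle : |discountedSum u γ| ≤ (1 - γ)⁻¹ * C := by
    rw [← Real.norm_eq_abs]
    refine tsum_of_norm_bounded ((hasSum_geometric_of_lt_one h0 h1).mul_right C) fun t => ?_
    rw [Real.norm_eq_abs, abs_mul, abs_of_nonneg (pow_nonneg h0 t)]
    exact mul_le_mul_of_nonneg_left (hu t) (pow_nonneg h0 t)
  have hpos : 0 < 1 - γ := by linarith
  calc (1 - γ) * |discountedSum u γ| ≤ (1 - γ) * ((1 - γ)⁻¹ * C) :=
        mul_le_mul_of_nonneg_left hle hpos.le
    _ = C := by field_simp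

theorem discountedSum_sub_succ {u : ℕ → ℝ} {C : ℝ} (hu : ∀ t, |u t| ≤ C) {γ : ℝ}
    (h0 : 0 ≤ γ) (h1 : γ < 1) :
    discountedSum (fun t => u t - u (t + 1)) γ =
      u 0 - (1 - γ) * discountedSum (fun t => u (t + 1)) γ := by
  have hsub : discountedSum (fun t => u t - u (t + 1)) γ =
      discountedSum u γ - discountedSum (fun t => u (t + 1)) γ := by
    unfold discountedSum
    rw [← (summable_discounted hu h0 h1).tsum_sub
      (summable_discounted (fun t => hu (t + 1)) h0 h1)]
    simp [mul_sub]
  rw [hsub, discountedSum_eq_zero_add hu h0 h1]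
  ring

theorem eventually_mem_Ioo_zero_one : ∀ᶠ γ : ℝ in 𝓝[<] (1 : ℝ), γ ∈ Set.Ioo (0 : ℝ) 1 :=
  Ioo_mem_nhdsLT one_pos

/-- Discounted sums of second differences of a bounded sequence converge as `γ → 1⁻`. -/
theorem tendsto_discountedSum_second_difference {u : ℕ → ℝ} {C : ℝ} (hu : ∀ t, |u t| ≤ C) :
    Tendsto (discountedSum fun t => (u t - u (t + 1)) - (u (t + 1) - u (t + 2)))
      (𝓝[<] (1 : ℝ)) (𝓝 (u 0 - u 1)) := by
  have hdiff : ∀ t, |u t - u (t + 1)| ≤ C + C := fun t =>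
    (abs_sub _ _).trans (add_le_add (hu t) (hu (t + 1)))
  have hone : Tendsto (fun γ : ℝ => (1 - γ) * (C + C)) (𝓝[<] (1 : ℝ)) (𝓝 0) := by
    have hc : Continuous fun γ : ℝ => (1 - γ) * (C + C) := by fun_prop
    simpa using (hc.tendsto 1).mono_left nhdsWithin_le_nhds
  rw [tendsto_iff_dist_tendsto_zero]
  refine squeeze_zero' (Eventually.of_forall fun _ => dist_nonneg) ?_ hone
  filter_upwards [eventually_mem_Ioo_zero_one] with γ hγ
  have hpos : 0 < 1 - γ := by linarith [hγ.2]
  have hstep := discountedSum_sub_succ hdiff hγ.1.le hγ.2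
  have htail := discountedSum_sub_succ (fun t => hu (t + 1)) hγ.1.le hγ.2
  have hbound : |discountedSum (fun t => u (t + 1) - u (t + 1 + 1)) γ| ≤ C + C := by
    rw [htail]
    refine (abs_sub _ _).trans (add_le_add (hu _) ?_)
    rw [abs_mul, abs_of_pos hpos]
    exact one_sub_mul_abs_discountedSum_le (fun t => hu (t + 1 + 1)) hγ.1.le hγ.2
  rw [hstep, Real.dist_eq]
  rw [show u 0 - u (0 + 1) - (1 - γ) * discountedSum (fun t => u (t + 1) - u (t + 1 + 1)) γ
      - (u 0 - u 1) = -((1 - γ) * discountedSum (fun t => u (t + 1) - u (t + 1 + 1)) γ) by ring,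
    abs_neg, abs_mul, abs_of_pos hpos]
  exact mul_le_mul_of_nonneg_left hbound hpos.le

/-- Prepending a finite list of rewards to a sequence adds their sum to the Abel limit. -/
theorem tendsto_discountedSum_of_list {X : Type*} (r : X → ℝ) {u : ℕ → ℝ} {c : ℝ}
    (hc : Tendsto (discountedSum u) (𝓝[<] (1 : ℝ)) (𝓝 c)) {C : ℝ} (l : List X) {e : ℕ → ℝ}
    (he : ∀ t, |e t| ≤ C) (hl : ∀ (t : ℕ) (ht : t < l.length), e t = r (l[t]'ht))
    (hu : ∀ k, e (l.length + k) = u k) :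
    Tendsto (discountedSum e) (𝓝[<] (1 : ℝ)) (𝓝 ((l.map r).sum + c)) := by
  induction l generalizing e with
  | nil =>
    have heu : e = u := funext fun k => by simpa using hu k
    simpa [heu] using hc
  | cons x l ih =>
    have htail := ih (e := fun t => e (t + 1)) (fun t => he (t + 1))
      (fun t ht => hl (t + 1) (by simpa using ht))
      (fun k => by rw [← hu k]; simp only [List.length_cons]; congr 1; ring)
    have hid : Tendsto (fun γ : ℝ => γ) (𝓝[<] (1 : ℝ)) (𝓝 1) :=
      tendsto_id.mono_left nhdsWithin_le_nhds
    have hlim := (hid.mul htail).const_add (r x)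
    rw [one_mul, ← add_assoc] at hlim
    rw [List.map_cons, List.sum_cons]
    refine hlim.congr' ?_
    filter_upwards [eventually_mem_Ioo_zero_one] with γ hγ
    rw [discountedSum_eq_zero_add he hγ.1.le hγ.2, hl 0 (by simp)]
    rfl

/-! ### Stochastic matrices with a unique Cesàro limit -/

section Stochastic

variable {ι : Type*} [Fintype ι] [DecidableEq ι]

theorem abs_pow_mulVec_le {M : Matrix ι ι ℝ} (hM : ∀ i j, 0 ≤ M i j)
    (hrow : ∀ i, ∑ j, M i j = 1) {x : ι → ℝ} {C : ℝ} (hx : ∀ i, |x i| ≤ C) (t : ℕ) (i : ι) :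
    |((M ^ t).mulVec x) i| ≤ C := by
  induction t generalizing i with
  | zero => simpa using hx i
  | succ t ih =>
    rw [pow_succ', ← Matrix.mulVec_mulVec, Matrix.mulVec, dotProduct]
    calc |∑ j, M i j * ((M ^ t).mulVec x) j| ≤ ∑ j, |M i j * ((M ^ t).mulVec x) j| :=
          abs_sum_le_sum_abs _ _
      _ ≤ ∑ j, M i j * C := by
          refine sum_le_sum fun j _ => ?_
          rw [abs_mul, abs_of_nonneg (hM i j)]
          exact mul_le_mul_of_nonneg_left (ih j) (hM i j)
      _ = C := by rw [← sum_mul, hrow, one_mul]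

theorem tendsto_cesaro_mulVec {M : Matrix ι ι ℝ} {μ : ι → ℝ}
    (hces : ∀ i j, Tendsto (fun T : ℕ => (∑ t ∈ range T, (M ^ t) i j) / (T : ℝ))
      atTop (𝓝 (μ j))) (x : ι → ℝ) (i : ι) :
    Tendsto (fun T : ℕ => (∑ t ∈ range T, ((M ^ t).mulVec x) i) / (T : ℝ))
      atTop (𝓝 (∑ j, μ j * x j)) := by
  have hlim := tendsto_finsetSum univ fun j _ => (hces i j).mul_const (x j)
  refine hlim.congr fun T => ?_
  simp only [Matrix.mulVec, dotProduct]
  rw [sum_comm, sum_div]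
  refine sum_congr rfl fun j _ => ?_
  rw [← sum_mul]
  ring

theorem eq_cesaro_of_mulVec_eq {M : Matrix ι ι ℝ} {μ : ι → ℝ}
    (hces : ∀ i j, Tendsto (fun T : ℕ => (∑ t ∈ range T, (M ^ t) i j) / (T : ℝ))
      atTop (𝓝 (μ j))) {x : ι → ℝ} (hx : M.mulVec x = x) (i : ι) :
    x i = ∑ j, μ j * x j := by
  have hpow : ∀ t : ℕ, (M ^ t).mulVec x = x := fun t => by
    induction t with
    | zero => simp
    | succ t ih => rw [pow_succ', ← Matrix.mulVec_mulVec, ih, hx]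
  refine tendsto_nhds_unique ?_ (tendsto_cesaro_mulVec hces x i)
  refine tendsto_const_nhds.congr' ?_
  filter_upwards [eventually_gt_atTop 0] with T hT
  have hT' : (T : ℝ) ≠ 0 := by exact_mod_cast hT.ne'
  simp only [hpow, sum_const, card_range, nsmul_eq_mul]
  field_simp

theorem sum_cesaro_eq_one [Nonempty ι] {M : Matrix ι ι ℝ} (hrow : ∀ i, ∑ j, M i j = 1)
    {μ : ι → ℝ} (hces : ∀ i j, Tendsto (fun T : ℕ => (∑ t ∈ range T, (M ^ t) i j) / (T : ℝ))
      atTop (𝓝 (μ j))) :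
    ∑ j, μ j = 1 := by
  obtain ⟨i⟩ := ‹Nonempty ι›
  have h := eq_cesaro_of_mulVec_eq hces (x := fun _ => 1)
    (funext fun i => by simp [Matrix.mulVec, dotProduct, hrow]) i
  simpa using h.symm

theorem cesaro_mulVec_eq [Nonempty ι] {M : Matrix ι ι ℝ} (hM : ∀ i j, 0 ≤ M i j)
    (hrow : ∀ i, ∑ j, M i j = 1) {μ : ι → ℝ}
    (hces : ∀ i j, Tendsto (fun T : ℕ => (∑ t ∈ range T, (M ^ t) i j) / (T : ℝ))
      atTop (𝓝 (μ j))) (x : ι → ℝ) :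
    ∑ j, μ j * M.mulVec x j = ∑ j, μ j * x j := by
  obtain ⟨i⟩ := ‹Nonempty ι›
  have hbound : ∀ j, |x j| ≤ ∑ j, |x j| := fun j =>
    single_le_sum (f := fun j => |x j|) (fun j _ => abs_nonneg (x j)) (mem_univ j)
  have hsub := (tendsto_cesaro_mulVec hces (M.mulVec x) i).sub (tendsto_cesaro_mulVec hces x i)
  refine sub_eq_zero.1 (tendsto_nhds_unique hsub ?_)
  have hinv := tendsto_const_div_atTop_nhds_zero_nat (∑ j, |x j| + ∑ j, |x j|)
  refine squeeze_zero_norm (fun T => ?_) hinv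
  rw [← sub_div, ← sum_sub_distrib]
  have htel : ∑ t ∈ range T, (((M ^ t).mulVec (M.mulVec x)) i - ((M ^ t).mulVec x) i) =
      ((M ^ T).mulVec x) i - ((M ^ 0).mulVec x) i := by
    rw [← sum_range_sub fun t => ((M ^ t).mulVec x) i]
    refine sum_congr rfl fun t _ => ?_
    rw [Matrix.mulVec_mulVec, ← pow_succ]
  rw [htel, norm_div, Real.norm_natCast, Real.norm_eq_abs]
  gcongr
  exact (abs_sub _ _).trans
    (add_le_add (abs_pow_mulVec_le hM hrow hbound T i) (abs_pow_mulVec_le hM hrow hbound 0 i))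

/-- Solvability of the Poisson equation for a centred right-hand side, by a centred solution. -/
theorem exists_poisson_solution [Nonempty ι] {M : Matrix ι ι ℝ} (hM : ∀ i j, 0 ≤ M i j)
    (hrow : ∀ i, ∑ j, M i j = 1) {μ : ι → ℝ}
    (hces : ∀ i j, Tendsto (fun T : ℕ => (∑ t ∈ range T, (M ^ t) i j) / (T : ℝ))
      atTop (𝓝 (μ j))) {x : ι → ℝ} (hx : ∑ j, μ j * x j = 0) :
    ∃ w : ι → ℝ, x = w - M.mulVec w ∧ ∑ j, μ j * w j = 0 := by
  have hμ := sum_cesaro_eq_one hrow hces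
  let f : (ι → ℝ) →ₗ[ℝ] (ι → ℝ) :=
    { toFun := fun w i => w i - M.mulVec w i + ∑ j, μ j * w j
      map_add' := fun v w => by
        ext i
        simp only [Matrix.mulVec_add, Pi.add_apply, mul_add, sum_add_distrib]
        ring
      map_smul' := fun c w => by
        ext i
        simp only [Matrix.mulVec_smul, Pi.smul_apply, smul_eq_mul, RingHom.id_apply,
          mul_left_comm _ c, ← mul_sum]
        ring }
  have hf : ∀ w i, f w i = w i - M.mulVec w i + ∑ j, μ j * w j := fun _ _ => rfl
  have hmean : ∀ w, ∑ j, μ j * f w j = ∑ j, μ j * w j := fun w => by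
    simp only [hf, mul_add, mul_sub, sum_add_distrib, sum_sub_distrib]
    rw [cesaro_mulVec_eq hM hrow hces, ← sum_mul, hμ]
    ring
  have hinj : Function.Injective f := by
    rw [injective_iff_map_eq_zero]
    intro w hw
    have h0 : ∑ j, μ j * w j = 0 := by rw [← hmean w, hw]; simp
    have hfix : M.mulVec w = w := funext fun i => by
      have hi := congrFun hw i
      rw [hf, h0] at hi
      simp only [Pi.zero_apply] at hi
      linarith
    exact funext fun i => by rw [eq_cesaro_of_mulVec_eq hces hfix i, h0]; rfl
  obtain ⟨w, rfl⟩ := LinearMap.injective_iff_surjective.1 hinj x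
  rw [hmean] at hx
  exact ⟨w, funext fun i => by rw [hf, hx]; simp, hx⟩

/-- For a centred vector, the discounted sums of its iterates converge as `γ → 1⁻`. -/
theorem exists_tendsto_discountedSum_pow [Nonempty ι] {M : Matrix ι ι ℝ}
    (hM : ∀ i j, 0 ≤ M i j) (hrow : ∀ i, ∑ j, M i j = 1) {μ : ι → ℝ}
    (hces : ∀ i j, Tendsto (fun T : ℕ => (∑ t ∈ range T, (M ^ t) i j) / (T : ℝ))
      atTop (𝓝 (μ j))) {x : ι → ℝ} (hx : ∑ j, μ j * x j = 0) :
    ∃ w : ι → ℝ, ∀ i,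
      Tendsto (discountedSum fun t => ((M ^ t).mulVec x) i) (𝓝[<] (1 : ℝ)) (𝓝 (w i)) := by
  obtain ⟨w, hw, hw0⟩ := exists_poisson_solution hM hrow hces hx
  obtain ⟨v, hv, -⟩ := exists_poisson_solution hM hrow hces hw0
  have hbound : ∀ j, |v j| ≤ ∑ j, |v j| := fun j =>
    single_le_sum (f := fun j => |v j|) (fun j _ => abs_nonneg (v j)) (mem_univ j)
  refine ⟨fun i => ((M ^ 0).mulVec v) i - ((M ^ 1).mulVec v) i, fun i => ?_⟩
  convert tendsto_discountedSum_second_difference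
    (fun t => abs_pow_mulVec_le hM hrow hbound t i) using 3 with t
  rw [hw, hv]
  simp only [Matrix.mulVec_sub, Matrix.mulVec_mulVec, Pi.sub_apply, ← pow_succ]
  simp only [← Matrix.mul_assoc, ← pow_succ]

end Stochastic

/-! ### Finite-dimensional marginals -/

instance discreteMeasurableSpace_prod (S A : Type) : DiscreteMeasurableSpace (S × A) :=
  ⟨fun _ => trivial⟩

section Marginals

variable {X : Type*} [Fintype X] [MeasurableSpace X] [DiscreteMeasurableSpace X]

theorem integral_comp_fin_restrict (ℓ : Measure (ℕ → X)) [IsProbabilityMeasure ℓ] (n : ℕ)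
    (g : (Fin n → X) → ℝ) :
    ∫ ω, g (fun i => ω i) ∂ℓ = ∑ y, ℓ.real {ω | ∀ i : Fin n, ω i = y i} * g y := by
  have hm : Measurable fun (ω : ℕ → X) (i : Fin n) => ω i :=
    measurable_pi_lambda _ fun i => measurable_pi_apply _
  have := Measure.isProbabilityMeasure_map (μ := ℓ) hm.aemeasurable
  rw [← integral_map (φ := fun (ω : ℕ → X) (i : Fin n) => ω i) hm.aemeasurable
    (measurable_of_finite g).aestronglyMeasurable, integral_fintype Integrable.of_finite]
  refine sum_congr rfl fun y _ => ?_
  rw [smul_eq_mul, map_measureReal_apply hm (measurableSet_singleton y)]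
  congr 2
  ext ω
  simp [funext_iff]

theorem integral_eval_eq_sum_snoc (ℓ : Measure (ℕ → X)) [IsProbabilityMeasure ℓ] (n : ℕ)
    (F : X → ℝ) :
    ∫ ω, F (ω n) ∂ℓ = ∑ y : Fin n → X, ∑ x : X,
      ℓ.real {ω | ∀ i : Fin (n + 1), ω i = (Fin.snoc y x : Fin (n + 1) → X) i} * F x := by
  rw [show ∫ ω, F (ω n) ∂ℓ = _ from
    integral_comp_fin_restrict ℓ (n + 1) fun y => F (y (Fin.last n)),
    ← (Fin.snocEquiv fun _ => X).sum_comp, Fintype.sum_prod_type, sum_comm]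
  simp [Fin.snocEquiv]

theorem integrable_eval (ℓ : Measure (ℕ → X)) [IsProbabilityMeasure ℓ] (r : X → ℝ) (t : ℕ) :
    Integrable (fun ω => r (ω t)) ℓ := by
  have hm : Measurable fun ω : ℕ → X => ω t := measurable_pi_apply t
  have := Measure.isProbabilityMeasure_map (μ := ℓ) hm.aemeasurable
  exact (Integrable.of_finite (f := r) (μ := ℓ.map fun ω => ω t)).comp_measurable hm

omit [DiscreteMeasurableSpace X] in
theorem abs_integral_eval_le (ℓ : Measure (ℕ → X)) [IsProbabilityMeasure ℓ] (r : X → ℝ) (t : ℕ) :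
    |∫ ω, r (ω t) ∂ℓ| ≤ ∑ x, |r x| := by
  have h := norm_integral_le_of_norm_le_const (μ := ℓ) (f := fun ω => r (ω t))
    (C := ∑ x, |r x|) (Eventually.of_forall fun ω =>
      single_le_sum (f := fun x => |r x|) (fun x _ => abs_nonneg (r x)) (mem_univ (ω t)))
  simpa using h

end Marginals

section MarkovFamily

variable {π : S → A → ℝ} {P : A → S → S → ℝ} {L : List (S × A) × S → Measure (ℕ → S × A)}

/-- The expectation of `F (s, a)` when `a` is drawn from the policy at `s`. -/
def policyAverage (π : S → A → ℝ) (F : S × A → ℝ) (s : S) : ℝ := ∑ a, π s a * F (s, a)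

/-- The expectation of `F` at the state–action pair following a given one. -/
def nextExpectation (π : S → A → ℝ) (P : A → S → S → ℝ) (F : S × A → ℝ) (x : S × A) : ℝ :=
  ∑ s, P x.2 x.1 s * policyAverage π F s

omit [DecidableEq S] [DecidableEq A] [Nonempty S] [Nonempty A] in
theorem policyAverage_nextExpectation (F : S × A → ℝ) :
    policyAverage π (nextExpectation π P F) = (Mmat π P).mulVec (policyAverage π F) := by
  ext s
  simp only [policyAverage, nextExpectation, Matrix.mulVec, dotProduct, Mmat, Matrix.of_apply,
    mul_sum, sum_mul]
  rw [sum_comm]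
  refine sum_congr rfl fun s' _ => ?_
  rw [sum_comm]
  exact sum_congr rfl fun a _ => sum_congr rfl fun a' _ => by ring

omit [Fintype S] [Fintype A] [Nonempty S] [Nonempty A] in
theorem IsMarkovPrefixFamily.measureReal_cylinder (hfam : IsMarkovPrefixFamily π P L)
    (l : List (S × A)) (z : S) {n : ℕ} (hn : l.length ≤ n) (x : ℕ → S × A) :
    (L (l, z)).real {ω | ∀ i : Fin (n + 1), ω i = x i} =
      (if (∀ t : Fin l.length, x t = l.get t) ∧ (x l.length).1 = z then (1 : ℝ) else 0) *
        (π (x l.length).1 (x l.length).2 *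
          ∏ k ∈ Finset.Ico l.length n,
            (P (x k).2 (x k).1 (x (k + 1)).1 * π (x (k + 1)).1 (x (k + 1)).2)) := by
  rw [← hfam l z n hn x, measureReal_def]
  congr 3
  ext ω
  simp [Fin.forall_iff]

theorem exists_nat_extension {X : Type*} {n : ℕ} (y : Fin (n + 1) → X) :
    ∃ x : ℕ → X, ∀ i : Fin (n + 1), x i = y i :=
  ⟨fun k => y (Fin.ofNat (n + 1) k), fun i => by simp⟩

omit [Fintype S] [Fintype A] [Nonempty S] [Nonempty A] in
theorem IsMarkovPrefixFamily.measureReal_cylinder_snoc (hfam : IsMarkovPrefixFamily π P L)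
    (l : List (S × A)) (z : S) {n : ℕ} (hn : l.length ≤ n) (y : Fin (n + 1) → S × A)
    (p : S × A) :
    (L (l, z)).real {ω | ∀ i : Fin (n + 1 + 1), ω i = (Fin.snoc y p : Fin (n + 2) → S × A) i} =
      (L (l, z)).real {ω | ∀ i : Fin (n + 1), ω i = y i} *
        (P (y (Fin.last n)).2 (y (Fin.last n)).1 p.1 * π p.1 p.2) := by
  obtain ⟨x, hx⟩ := exists_nat_extension (Fin.snoc y p : Fin (n + 2) → S × A)
  have hy : ∀ i : Fin (n + 1), x i = y i := fun i => by simpa using hx i.castSucc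
  have hp : x (n + 1) = p := by simpa using hx (Fin.last (n + 1))
  simp only [← hx, ← hy]
  rw [hfam.measureReal_cylinder l z hn, hfam.measureReal_cylinder l z (Nat.le_succ_of_le hn),
    prod_Ico_succ_top hn, ← hp, Fin.val_last]
  ring

omit [Nonempty S] [Nonempty A] in
theorem IsMarkovPrefixFamily.integral_eval_succ (hfam : IsMarkovPrefixFamily π P L)
    (l : List (S × A)) (z : S) [IsProbabilityMeasure (L (l, z))] {n : ℕ} (hn : l.length ≤ n)
    (F : S × A → ℝ) :
    ∫ ω, F (ω (n + 1)) ∂L (l, z) = ∫ ω, nextExpectation π P F (ω n) ∂L (l, z) := by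
  rw [integral_eval_eq_sum_snoc, show ∫ ω, nextExpectation π P F (ω n) ∂L (l, z) = _ from
    integral_comp_fin_restrict (L (l, z)) (n + 1) fun y => nextExpectation π P F (y (Fin.last n))]
  refine sum_congr rfl fun y _ => ?_
  simp only [hfam.measureReal_cylinder_snoc l z hn, nextExpectation, policyAverage, mul_sum,
    Fintype.sum_prod_type]
  exact sum_congr rfl fun s _ => sum_congr rfl fun a _ => by ring

omit [Nonempty S] [Nonempty A] in
theorem IsMarkovPrefixFamily.integral_eval_length (hfam : IsMarkovPrefixFamily π P L)
    (l : List (S × A)) (z : S) [IsProbabilityMeasure (L (l, z))] (F : S × A → ℝ) :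
    ∫ ω, F (ω l.length) ∂L (l, z) = policyAverage π F z := by
  have hcyl : ∀ (y : Fin l.length → S × A) (p : S × A),
      (L (l, z)).real
          {ω | ∀ i : Fin (l.length + 1), ω i = (Fin.snoc y p : Fin (l.length + 1) → S × A) i} =
        if y = l.get ∧ p.1 = z then π p.1 p.2 else 0 := fun y p => by
    obtain ⟨x, hx⟩ := exists_nat_extension (Fin.snoc y p : Fin (l.length + 1) → S × A)
    have hy : ∀ i : Fin l.length, x i = y i := fun i => by simpa using hx i.castSucc
    have hp : x l.length = p := by simpa using hx (Fin.last l.length)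
    simp only [← hx]
    rw [hfam.measureReal_cylinder l z le_rfl, hp]
    simp only [hy, funext_iff, Ico_self, prod_empty, mul_one, ite_mul, one_mul, zero_mul]
  rw [integral_eval_eq_sum_snoc, Fintype.sum_eq_single l.get, Fintype.sum_prod_type,
    Fintype.sum_eq_single z]
  · simp [hcyl, policyAverage]
  · intro s hs
    simp [hcyl, hs]
  · intro y hy
    simp [hcyl, hy]

omit [Nonempty S] [Nonempty A] in
theorem IsMarkovPrefixFamily.integral_eval_of_lt (hfam : IsMarkovPrefixFamily π P L)
    (l : List (S × A)) (z : S) [IsProbabilityMeasure (L (l, z))] (F : S × A → ℝ) {t : ℕ}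
    (ht : t < l.length) :
    ∫ ω, F (ω t) ∂L (l, z) = F l[t] := by
  rw [← sub_eq_zero]
  have hconst : ∫ ω, F (ω t) ∂L (l, z) - F l[t] = ∫ ω, (F (ω t) - F l[t]) ∂L (l, z) := by
    rw [integral_sub (integrable_eval _ F t) (integrable_const _)]
    simp
  rw [hconst, integral_comp_fin_restrict (L (l, z)) (l.length + 1)
    fun y => F (y ⟨t, ht.trans l.length.lt_succ_self⟩) - F l[t]]
  refine sum_eq_zero fun y _ => ?_
  obtain ⟨x, hx⟩ := exists_nat_extension y
  simp only [← hx]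
  rw [hfam.measureReal_cylinder l z le_rfl]
  split_ifs with h
  · have hxt : x t = l[t] := h.1 ⟨t, ht⟩
    rw [hxt, sub_self, mul_zero]
  · simp

omit [Nonempty S] [Nonempty A] in
theorem IsMarkovPrefixFamily.integral_eval_length_add (hfam : IsMarkovPrefixFamily π P L)
    (l : List (S × A)) (z : S) [IsProbabilityMeasure (L (l, z))] (F : S × A → ℝ) (k : ℕ) :
    ∫ ω, F (ω (l.length + k)) ∂L (l, z) = (Mmat π P ^ k).mulVec (policyAverage π F) z := by
  induction k generalizing F with
  | zero => simpa using hfam.integral_eval_length l z F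
  | succ k ih =>
    rw [← add_assoc, hfam.integral_eval_succ l z (Nat.le_add_right _ _), ih,
      policyAverage_nextExpectation, Matrix.mulVec_mulVec, ← pow_succ]

omit [DecidableEq S] [DecidableEq A] [Nonempty S] [Nonempty A] in
theorem Mmat_nonneg (hπ : IsPolicy π) (hP : IsTransition P) (s s' : S) : 0 ≤ Mmat π P s s' :=
  sum_nonneg fun a _ => mul_nonneg (hπ.1 s a) (hP.1 a s s')

omit [DecidableEq S] [DecidableEq A] [Nonempty S] [Nonempty A] in
theorem sum_Mmat (hπ : IsPolicy π) (hP : IsTransition P) (s : S) : ∑ s', Mmat π P s s' = 1 := by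
  simp only [Mmat, Matrix.of_apply]
  rw [sum_comm]
  simp [← mul_sum, hP.2, hπ.2]

omit [Nonempty A] in
/-- After subtracting the gain from the reward, the discounted returns of a unichain Markov prefix
family converge as `γ → 1⁻` to a bootstrapped return. -/
theorem IsMarkovPrefixFamily.exists_tendsto_vdisc (hfam : IsMarkovPrefixFamily π P L)
    (hprob : ∀ h, IsProbabilityMeasure (L h)) (hπ : IsPolicy π) (hP : IsTransition P)
    (huni : Unichain π P) (r : S × A → ℝ) :
    ∃ (g : ℝ) (V : S → ℝ), ∀ h,
      Tendsto (vdisc (L h) fun x => r x - g) (𝓝[<] (1 : ℝ))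
        (𝓝 (Breturn (fun x => r x - g) V h)) := by
  obtain ⟨μ, hμ⟩ := huni
  have hM := Mmat_nonneg hπ hP
  have hrow := sum_Mmat hπ hP
  have hμ1 := sum_cesaro_eq_one hrow hμ
  refine ⟨∑ s, μ s * policyAverage π r s, ?_⟩
  generalize hg : ∑ s, μ s * policyAverage π r s = g
  have havg : ∑ s, μ s * policyAverage π (fun x => r x - g) s = 0 := by
    have h : ∀ s, policyAverage π (fun x => r x - g) s = policyAverage π r s - g := fun s => by
      simp only [policyAverage, mul_sub, sum_sub_distrib, ← sum_mul, hπ.2, one_mul]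
    simp only [h, mul_sub, sum_sub_distrib, ← sum_mul, hμ1, hg, one_mul, sub_self]
  obtain ⟨V, hV⟩ := exists_tendsto_discountedSum_pow hM hrow hμ havg
  refine ⟨V, fun ⟨l, z⟩ => ?_⟩
  have := hprob (l, z)
  exact tendsto_discountedSum_of_list _ (hV z) l (e := fun t => ∫ ω, (r (ω t) - g) ∂L (l, z))
    (abs_integral_eval_le (L (l, z)) fun x => r x - g)
    (fun t ht => hfam.integral_eval_of_lt l z (fun x => r x - g) ht)
    (fun k => hfam.integral_eval_length_add l z (fun x => r x - g) k)

end MarkovFamily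

/-! ### Changes of reward function -/

omit [DecidableEq S] [DecidableEq A] [Nonempty S] [Nonempty A] in
theorem vdisc_sub_const (ℓ : Measure (ℕ → S × A)) [IsProbabilityMeasure ℓ] (r : S × A → ℝ)
    (g : ℝ) {γ : ℝ} (h0 : 0 ≤ γ) (h1 : γ < 1) :
    vdisc ℓ (fun x => r x - g) γ = vdisc ℓ r γ - g * (1 - γ)⁻¹ := by
  have hint : ∀ t : ℕ, ∫ ω, (r (ω t) - g) ∂ℓ = ∫ ω, r (ω t) ∂ℓ - g := fun t => by
    rw [integral_sub (integrable_eval ℓ r t) (integrable_const g)]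
    simp
  unfold vdisc
  simp only [hint, mul_sub]
  rw [(summable_discounted (abs_integral_eval_le ℓ r) h0 h1).tsum_sub
    ((summable_geometric_of_lt_one h0 h1).mul_right g), tsum_mul_right,
    tsum_geometric_of_lt_one h0 h1, mul_comm g]

omit [DecidableEq S] [DecidableEq A] [Nonempty S] [Nonempty A] in
theorem expresses_sub_const {r : S × A → ℝ}
    {pref : Measure (ℕ → S × A) → Measure (ℕ → S × A) → Prop} (h : Expresses r pref) (g : ℝ) :
    Expresses (fun x => r x - g) pref := by
  intro ℓ ℓ' hℓ hℓ'
  have := hℓ.1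
  have := hℓ'.1
  rw [h ℓ ℓ' hℓ hℓ']
  refine exists_congr fun c => and_congr_right fun _ => tendsto_congr' ?_
  filter_upwards [eventually_mem_Ioo_zero_one] with γ hγ
  rw [vdisc_sub_const ℓ r g hγ.1.le hγ.2, vdisc_sub_const ℓ' r g hγ.1.le hγ.2]
  ring

omit [Fintype S] [DecidableEq S] [Fintype A] [DecidableEq A] [Nonempty S] [Nonempty A] in
theorem vdisc_eq_mul_of_measureOn {S' : Set S} {A' : Set A} {ℓ : Measure (ℕ → S × A)}
    [IsProbabilityMeasure ℓ] (hℓ : MeasureOn S' A' ℓ) {r r' : S × A → ℝ} {c : ℝ}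
    (hc : ∀ x : S × A, x.1 ∈ S' → x.2 ∈ A' → r x = c * r' x) (γ : ℝ) :
    vdisc ℓ r γ = c * vdisc ℓ r' γ := by
  have hmeas : MeasurableSet {ω : ℕ → S × A | ∀ t : ℕ, (ω t).1 ∈ S' ∧ (ω t).2 ∈ A'} := by
    rw [Set.ofPred_forall]
    exact MeasurableSet.iInter fun t =>
      (measurable_pi_apply (X := fun _ => S × A) t)
        (MeasurableSet.of_discrete (s := {x : S × A | x.1 ∈ S' ∧ x.2 ∈ A'}))
  have hae : ∀ᵐ ω ∂ℓ, ∀ t : ℕ, (ω t).1 ∈ S' ∧ (ω t).2 ∈ A' :=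
    (mem_ae_iff_prob_eq_one hmeas).2 hℓ
  unfold vdisc
  rw [← tsum_mul_left]
  refine tsum_congr fun t => ?_
  have hint : ∫ ω, r (ω t) ∂ℓ = ∫ ω, c * r' (ω t) ∂ℓ :=
    integral_congr_ae (hae.mono fun ω hω => hc _ (hω t).1 (hω t).2)
  rw [hint, integral_const_mul]
  ring

omit [Fintype S] [DecidableEq S] [Fintype A] [DecidableEq A] [Nonempty S] [Nonempty A] in
theorem expressesOn_of_eq_mul {S' : Set S} {A' : Set A} {r r' : S × A → ℝ}
    {pref : Measure (ℕ → S × A) → Measure (ℕ → S × A) → Prop} (h : Expresses r' pref) {c : ℝ}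
    (hpos : 0 < c) (hc : ∀ x : S × A, x.1 ∈ S' → x.2 ∈ A' → r x = c * r' x) :
    ExpressesOn S' A' r pref := by
  intro ℓ ℓ' hℓ hℓ' hon hon'
  have := hℓ.1
  have := hℓ'.1
  rw [h ℓ ℓ' hℓ hℓ']
  have hv : ∀ γ, vdisc ℓ r γ - vdisc ℓ' r γ = c * (vdisc ℓ r' γ - vdisc ℓ' r' γ) := fun γ => by
    rw [vdisc_eq_mul_of_measureOn hon hc, vdisc_eq_mul_of_measureOn hon' hc]
    ring
  simp only [hv]
  constructor
  · rintro ⟨d, hd, hlim⟩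
    exact ⟨c * d, by positivity, hlim.const_mul c⟩
  · rintro ⟨d, hd, hlim⟩
    refine ⟨c⁻¹ * d, by positivity, ?_⟩
    simpa [← mul_assoc, inv_mul_cancel₀ hpos.ne'] using hlim.const_mul c⁻¹

/-! ### Rewards inducing the same comparisons of finite sums -/

/-- Two pairs of reals for which integer combinations have the same signs are proportional. -/
theorem eq_div_mul_of_int_combination_nonneg_iff {a b a' b' : ℝ}
    (h : ∀ p q : ℤ, 0 ≤ p * a + q * b ↔ 0 ≤ p * a' + q * b') (ha' : a' ≠ 0) :
    0 < a / a' ∧ b = a / a' * b' := by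
  wlog hpos : 0 < a' generalizing a b a' b'
  · have hneg := this (a := -a) (b := -b) (a' := -a') (b' := -b')
      (fun p q => by simpa [add_comm] using h (-p) (-q)) (neg_ne_zero.2 ha')
      (neg_pos.2 (lt_of_le_of_ne (not_lt.1 hpos) ha'))
    rw [neg_div_neg_eq] at hneg
    exact ⟨hneg.1, by linarith [hneg.2]⟩
  have ha : 0 < a := by
    have := h (-1) 0
    simp only [Int.cast_neg, Int.cast_one, Int.cast_zero, zero_mul, add_zero] at this
    by_contra hle
    linarith [this.1 (by linarith)]
  refine ⟨div_pos ha hpos, ?_⟩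
  have hrat : ∀ x : ℚ, (x : ℝ) ≤ b / a ↔ (x : ℝ) ≤ b' / a' := fun x => by
    have hden : (0 : ℝ) < x.den := by exact_mod_cast x.den_pos
    have hx := h (-x.num) x.den
    push_cast at hx
    rw [le_div_iff₀ ha, le_div_iff₀ hpos, Rat.cast_def, div_mul_eq_mul_div, div_mul_eq_mul_div,
      div_le_iff₀ hden, div_le_iff₀ hden]
    constructor <;> intro hle
    · linarith [hx.1 (by linarith)]
    · linarith [hx.2 (by linarith)]
  have heq : b / a = b' / a' := by
    refine le_antisymm (le_of_forall_rat_lt_imp_le fun x hx => (hrat x).1 hx.le)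
      (le_of_forall_rat_lt_imp_le fun x hx => (hrat x).2 hx.le)
  field_simp at heq ⊢
  linarith

omit [Fintype S] [DecidableEq S] [Fintype A] [DecidableEq A] [Nonempty S] [Nonempty A] in
theorem int_combination_nonneg_iff_of_expressesPartialOn {S' : Set S} {A' : Set A}
    {r r' : S × A → ℝ} {V V' : S → ℝ} {prefP : List (S × A) × S → List (S × A) × S → Prop}
    (h : ExpressesPartialOn S' A' r V prefP) (h' : ExpressesPartialOn S' A' r' V' prefP)
    {x y : S × A} (hx : x.1 ∈ S' ∧ x.2 ∈ A') (hy : y.1 ∈ S' ∧ y.2 ∈ A') (p q : ℤ) :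
    0 ≤ p * r x + q * r y ↔ 0 ≤ p * r' x + q * r' y := by
  have hon : ∀ m n : ℕ, PTrajOn S' A' (List.replicate m x ++ List.replicate n y, x.1) :=
    fun m n => ⟨hx.1, fun z hz => by
      rcases List.mem_append.1 hz with hz | hz
      · exact (List.eq_of_mem_replicate hz).symm ▸ hx
      · exact (List.eq_of_mem_replicate hz).symm ▸ hy⟩
  have hiff := (h _ _ (hon p.toNat q.toNat) (hon (-p).toNat (-q).toNat)).symm.trans
    (h' _ _ (hon p.toNat q.toNat) (hon (-p).toNat (-q).toNat))
  have hcast : ∀ k : ℤ, (k : ℝ) = (k.toNat : ℝ) - ((-k).toNat : ℝ) := fun k => by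
    exact_mod_cast (Int.toNat_sub_toNat_neg k).symm
  simp only [Breturn, List.map_append, List.map_replicate, List.sum_append, List.sum_replicate,
    nsmul_eq_mul, add_le_add_iff_right] at hiff
  rw [hcast p, hcast q]
  constructor <;> intro hle
  · linarith [hiff.1 (by linarith)]
  · linarith [hiff.2 (by linarith)]

omit [DecidableEq S] [DecidableEq A] [Nonempty S] [Nonempty A] in
theorem exists_pos_mul_of_expressesPartialOn {S' : Set S} {A' : Set A}
    {r r' : S × A → ℝ} {V V' : S → ℝ} {prefP : List (S × A) × S → List (S × A) × S → Prop}
    (h : ExpressesPartialOn S' A' r V prefP) (h' : ExpressesPartialOn S' A' r' V' prefP) :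
    ∃ c : ℝ, 0 < c ∧ ∀ x : S × A, x.1 ∈ S' → x.2 ∈ A' → r x = c * r' x := by
  by_cases hzero : ∃ x : S × A, (x.1 ∈ S' ∧ x.2 ∈ A') ∧ r' x ≠ 0
  · obtain ⟨x, hx, hne⟩ := hzero
    have hprop := fun (y : S × A) (hy : y.1 ∈ S' ∧ y.2 ∈ A') =>
      eq_div_mul_of_int_combination_nonneg_iff
        (int_combination_nonneg_iff_of_expressesPartialOn h h' hx hy) hne
    exact ⟨r x / r' x, (hprop x hx).1, fun y hy hy' => (hprop y ⟨hy, hy'⟩).2⟩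
  · push Not at hzero
    refine ⟨1, one_pos, fun x hx hx' => ?_⟩
    have hr' := hzero x ⟨hx, hx'⟩
    have hsign := int_combination_nonneg_iff_of_expressesPartialOn h h' ⟨hx, hx'⟩ ⟨hx, hx'⟩
    have hge := (hsign 1 0).2 (by simp [hr'])
    have hle := (hsign (-1) 0).2 (by simp [hr'])
    simp only [Int.cast_neg, Int.cast_one, Int.cast_zero, zero_mul, add_zero] at hge hle
    linarith

/-- **Corollary (alignment on a subset).** Under Axioms 1 and 2, for any nonempty
`S' ⊆ S` and `A' ⊆ A`: (1) some pair `(r,V)` expresses `⪰∂` on `(S',A')`; and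
(2) any pair `(r,V)` that expresses `⪰∂` on `(S',A')` has `r` expressing `⪰` on
`(S',A')`. -/
theorem alignment_on_subset
    (pref : Measure (ℕ → S × A) → Measure (ℕ → S × A) → Prop)
    (prefP : List (S × A) × S → List (S × A) × S → Prop)
    (rstar : S × A → ℝ) (hax1 : Expresses rstar pref)
    (π : S → A → ℝ) (P : A → S → S → ℝ)
    (hπ : IsPolicy π) (hP : IsTransition P)
    (huni : Unichain π P)
    (L : List (S × A) × S → Measure (ℕ → S × A))
    (hfam : IsMarkovPrefixFamily π P L)
    (hmem : ∀ h, MemLinf (L h))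
    (hax2 : ∀ h h', prefP h h' ↔ pref (L h) (L h'))
    (S' : Set S) (A' : Set A) (hS' : S'.Nonempty) (hA' : A'.Nonempty) :
    (∃ (r : S × A → ℝ) (V : S → ℝ), ExpressesPartialOn S' A' r V prefP) ∧
      ∀ (r : S × A → ℝ) (V : S → ℝ),
        ExpressesPartialOn S' A' r V prefP → ExpressesOn S' A' r pref := by
  have hprob : ∀ h, IsProbabilityMeasure (L h) := fun h => (hmem h).1
  obtain ⟨g, V₀, hlim⟩ := hfam.exists_tendsto_vdisc hprob hπ hP huni rstar
  have hexp := expresses_sub_const hax1 g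
  have hpart : ExpressesPartialOn S' A' (fun x => rstar x - g) V₀ prefP := by
    intro h h' _ _
    rw [hax2, hexp _ _ (hmem h) (hmem h'), ← sub_nonneg]
    have hdiff := (hlim h).sub (hlim h')
    exact ⟨fun ⟨c, hc, hc'⟩ => tendsto_nhds_unique hc' hdiff ▸ hc, fun hle => ⟨_, hle, hdiff⟩⟩
  refine ⟨⟨_, V₀, hpart⟩, fun r V hrV => ?_⟩
  obtain ⟨c, hpos, hc⟩ := exists_pos_mul_of_expressesPartialOn hrV hpart
  exact expressesOn_of_eq_mul hexp hpos hc
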